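/- The conjunctive form of modus ponens, (p ∧ (p → q)) → q, for distinct atoms p and q, is not N-valid. -/

import Mathlib

/-! ## Dialogical logic: formulas, statements, moves -/

/-- Propositional formulas, built from atoms (indexed by `ℕ`) and `¬`, `∧`, `∨`, `→`. -/
inductive Formula : Type
  | atom : ℕ → Formula
  | neg : Formula → Formula
  | conj : Formula → Formula → Formula
  | disj : Formula → Formula → Formula
  | impl : Formula → Formula → Formula
  deriving DecidableEq, Inhabited

/-- Statements: formulas together with the three symbolic attacks `∧_L`, `∧_R` and `?`. -/
inductive Statement : Type
  | form : Formula → Statement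
  | conjL : Statement  -- the symbolic attack ∧_L
  | conjR : Statement  -- the symbolic attack ∧_R
  | question : Statement   -- the symbolic attack ?
  deriving DecidableEq, Inhabited

/-- A formula is atomic iff it is an atom. -/
def Formula.isAtomic : Formula → Prop
  | .atom _ => True
  | _ => False

/-- A move of a dialogue: a statement together with a reference.  The reference is
`none` for the initial move, `some (m, true)` for an attack on the assertion made at
move `m`, and `some (m, false)` for a defense against the attack made at move `m`. -/
structure Move : Type where
  stmt : Statement
  ref : Option (ℕ × Bool)
  deriving DecidableEq, Inhabited

/-! ## Particle rules -/

/-- Particle rules, attacks: `Attacks a φ` holds when the statement `a` is an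
admissible attack against the assertion `φ`. -/
inductive Attacks : Statement → Formula → Prop
  | conjL (φ ψ : Formula) : Attacks .conjL (.conj φ ψ)
  | conjR (φ ψ : Formula) : Attacks .conjR (.conj φ ψ)
  | disj (φ ψ : Formula) : Attacks .question (.disj φ ψ)
  | impl (φ ψ : Formula) : Attacks (.form φ) (.impl φ ψ)
  | neg (φ : Formula) : Attacks (.form φ) (.neg φ)

/-- Particle rules, defenses: `Defends s a φ` holds when the statement `s` is an
admissible defense of the assertion `φ` against the attack `a`.  (A negation admits
no defense.) -/
inductive Defends : Statement → Statement → Formula → Prop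
  | conjL (φ ψ : Formula) : Defends (.form φ) .conjL (.conj φ ψ)
  | conjR (φ ψ : Formula) : Defends (.form ψ) .conjR (.conj φ ψ)
  | disjL (φ ψ : Formula) : Defends (.form φ) .question (.disj φ ψ)
  | disjR (φ ψ : Formula) : Defends (.form ψ) .question (.disj φ ψ)
  | impl (φ ψ : Formula) : Defends (.form ψ) (.form φ) (.impl φ ψ)

/-! ## Dialogues

A (finite stage of a) dialogue is modelled as a list of moves; the move at index `i`
is the `i`-th move, made by Proponent P if `i` is even and by Opponent O if `i` is odd. -/

/-- The skeletal dialogue conditions: move 0 is an assertion of a formula with no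
reference, and every later move is an attack on, or a defense against, a specified
earlier move of the other player, in accordance with the particle rules; only
non-atomic assertions may be attacked. -/
def IsDialogue (d : List Move) : Prop :=
  (∀ _ : 0 < d.length, d[0]!.ref = none ∧ ∃ φ : Formula, d[0]!.stmt = .form φ) ∧
  (∀ i : ℕ, 0 < i → i < d.length →
    ∃ (m : ℕ) (z : Bool), d[i]!.ref = some (m, z) ∧ m < i ∧ m % 2 ≠ i % 2 ∧
      (z = true →
        ∃ φ : Formula, d[m]!.stmt = .form φ ∧ ¬ φ.isAtomic ∧ Attacks d[i]!.stmt φ) ∧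
      (z = false →
        ∃ (k : ℕ) (φ : Formula), d[m]!.ref = some (k, true) ∧ k < m ∧
          d[k]!.stmt = .form φ ∧ Defends d[i]!.stmt d[m]!.stmt φ))

/-- Rule D10: P may assert an atomic formula only if O has asserted it earlier. -/
def RuleD10 (d : List Move) : Prop :=
  ∀ i < d.length, i % 2 = 0 → ∀ a : ℕ, d[i]!.stmt = .form (.atom a) →
    ∃ j < i, j % 2 = 1 ∧ d[j]!.stmt = .form (.atom a)

/-- Rule D13: each P-assertion may be attacked at most once. -/
def RuleD13 (d : List Move) : Prop :=
  ∀ m : ℕ, m % 2 = 0 → ∀ i < d.length, ∀ j < d.length,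
    d[i]!.ref = some (m, true) → d[j]!.ref = some (m, true) → i = j

/-- Rule E: O may only react (attack or defend) against the immediately preceding
P-move. -/
def RuleE (d : List Move) : Prop :=
  ∀ i < d.length, i % 2 = 1 → ∃ z : Bool, d[i]!.ref = some (i - 1, z)

/-- The rule set N = {D10, D13}. -/
def NRules (d : List Move) : Prop := RuleD10 d ∧ RuleD13 d

/-- The rule set CL = {D10, D13, E}. -/
def CLRules (d : List Move) : Prop := RuleD10 d ∧ RuleD13 d ∧ RuleE d

/-- A dialogue commences with `φ` when its initial move is P's assertion of `φ`. -/
def CommencesWith (φ : Formula) (d : List Move) : Prop :=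
  0 < d.length ∧ d[0]!.stmt = .form φ

/-- An `S`-dialogue for `φ` (for a rule set `S`): a dialogue commencing with `φ`
that obeys the structural rules `S`.  These are exactly the branches (identified
with their underlying move sequences) of the `S`-dialogue tree for `φ`. -/
def SDialogueFor (S : List Move → Prop) (φ : Formula) (d : List Move) : Prop :=
  IsDialogue d ∧ S d ∧ CommencesWith φ d

/-- P wins a finite `S`-dialogue for `φ`: it ends with a P-move (the last index,
`d.length - 1`, is even, i.e. `d.length` is odd) and it cannot be extended by any
legal further (O-)move. -/
def WinsFor (S : List Move → Prop) (φ : Formula) (d : List Move) : Prop :=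
  SDialogueFor S φ d ∧ d.length % 2 = 1 ∧ ∀ m : Move, ¬ SDialogueFor S φ (d ++ [m])

/-- An `S`-winning strategy for P for `φ`, modelled as a set `T` of `S`-dialogues for
`φ`: the nodes of a rooted subtree of the `S`-dialogue tree for `φ`, each node being
identified with the dialogue leading from the root to it.  The conditions state that
`T` is a nonempty, prefix-closed set of `S`-dialogues for `φ` (hence a rooted subtree
of the `S`-dialogue tree with the same root), that every branch of `T` is a finite
`S`-dialogue won by P (leaves are wins for P, and there is no infinite branch), that
every node at odd depth (an O-move) has exactly one child, and that every node at
even depth (a P-move) has the same children in `T` as in the full dialogue tree. -/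
structure IsWinningStrategy (S : List Move → Prop) (φ : Formula) (T : Set (List Move)) : Prop where
  nonempty : T.Nonempty
  dialogues : ∀ d ∈ T, SDialogueFor S φ d
  prefix_closed : ∀ d ∈ T, ∀ e : List Move, e <+: d → 0 < e.length → e ∈ T
  leaf_wins : ∀ d ∈ T, (∀ m : Move, d ++ [m] ∉ T) → WinsFor S φ d
  no_infinite_branch : ∀ f : ℕ → Move, ∃ n : ℕ, 0 < n ∧ (List.ofFn fun i : Fin n => f i) ∉ T
  odd_unique_child : ∀ d ∈ T, 0 < d.length → d.length % 2 = 0 → ∃! m : Move, d ++ [m] ∈ T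
  even_all_children : ∀ d ∈ T, d.length % 2 = 1 →
    ∀ m : Move, SDialogueFor S φ (d ++ [m]) → d ++ [m] ∈ T

/-- `φ` is `S`-valid iff P has an `S`-winning strategy for `φ`. -/
def SValid (S : List Move → Prop) (φ : Formula) : Prop :=
  ∃ T : Set (List Move), IsWinningStrategy S φ T

/-- `φ` is N-valid (`⊨_N φ`) iff P has an N-winning strategy for `φ`. -/
def NValid (φ : Formula) : Prop := SValid NRules φ

/-! Rule set N lets Opponent repeat a defense against one and the same attack. Hence a Proponent
who has ever made an attack that admits a defense does not win: Opponent repeats the defense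
forever. After the opening `χ → q` and Opponent's attack `χ`, Proponent may not yet assert the atom
`q`, so the only available moves are attacks on `χ`, and these admit a defense unless `χ` is a
negation. -/

theorem Attacks.not_isAtomic {a : Statement} {φ : Formula} (h : Attacks a φ) : ¬ φ.isAtomic := by
  cases h <;> exact id

theorem Attacks.exists_defends {a : Statement} {φ : Formula} (h : Attacks a φ)
    (hneg : ∀ θ, φ ≠ .neg θ) : ∃ s, Defends s a φ := by
  cases h with
  | conjL φ ψ => exact ⟨_, .conjL φ ψ⟩
  | conjR φ ψ => exact ⟨_, .conjR φ ψ⟩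
  | disj φ ψ => exact ⟨_, .disjL φ ψ⟩
  | impl φ ψ => exact ⟨_, .impl φ ψ⟩
  | neg φ => exact absurd rfl (hneg φ)

section ListConcat

variable {α : Type*} {l : List α} {a : α}

theorem getElem!_append_of_lt [Inhabited α] (l' : List α) {i : ℕ} (hi : i < l.length) :
    (l ++ l')[i]! = l[i]! := by
  simp [List.getElem?_append_left hi]

theorem getElem!_append_singleton_length [Inhabited α] : (l ++ [a])[l.length]! = a := by
  simp

theorem forall_lt_length_append_singleton {P : ℕ → Prop} :
    (∀ i < (l ++ [a]).length, P i) ↔ (∀ i < l.length, P i) ∧ P l.length := by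
  rw [List.length_append, List.length_singleton, Nat.forall_lt_succ_right]

end ListConcat

/-- The move `m` is permitted by the particle rules as the next move after the dialogue `d`. The
player to move is read off from the parity of `d.length`. -/
inductive IsResponse (d : List Move) : Move → Prop
  | attack {k : ℕ} {s : Statement} {φ : Formula} (hk : k < d.length)
      (hplayer : k % 2 ≠ d.length % 2) (hφ : d[k]!.stmt = .form φ) (hs : Attacks s φ) :
      IsResponse d ⟨s, some (k, true)⟩
  | defense {k l : ℕ} {s : Statement} {φ : Formula} (hk : k < d.length)
      (hplayer : k % 2 ≠ d.length % 2) (hattack : d[k]!.ref = some (l, true)) (hl : l < k)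
      (hφ : d[l]!.stmt = .form φ) (hs : Defends s d[k]!.stmt φ) :
      IsResponse d ⟨s, some (k, false)⟩

section Dialogue

variable {d : List Move} {m : Move}

theorem isResponse_iff : IsResponse d m ↔
    ∃ (k : ℕ) (z : Bool), m.ref = some (k, z) ∧ k < d.length ∧ k % 2 ≠ d.length % 2 ∧
      (z = true → ∃ φ : Formula, d[k]!.stmt = .form φ ∧ ¬ φ.isAtomic ∧ Attacks m.stmt φ) ∧
      (z = false → ∃ (l : ℕ) (φ : Formula), d[k]!.ref = some (l, true) ∧ l < k ∧
        d[l]!.stmt = .form φ ∧ Defends m.stmt d[k]!.stmt φ) := by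
  constructor
  · rintro (⟨hk, hplayer, hφ, hs⟩ | ⟨hk, hplayer, hattack, hl, hφ, hs⟩)
    · exact ⟨_, _, rfl, hk, hplayer, fun _ => ⟨_, hφ, hs.not_isAtomic, hs⟩, nofun⟩
    · exact ⟨_, _, rfl, hk, hplayer, nofun, fun _ => ⟨_, _, hattack, hl, hφ, hs⟩⟩
  · obtain ⟨s, r⟩ := m
    rintro ⟨k, z | z, rfl, hk, hplayer, hattack, hdefense⟩
    · obtain ⟨l, φ, hattack, hl, hφ, hs⟩ := hdefense rfl
      exact .defense hk hplayer hattack hl hφ hs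
    · obtain ⟨φ, hφ, -, hs⟩ := hattack rfl
      exact .attack hk hplayer hφ hs

theorem isDialogue_iff_forall_isResponse_take : IsDialogue d ↔
    (0 < d.length → d[0]!.ref = none ∧ ∃ φ, d[0]!.stmt = .form φ) ∧
      ∀ i < d.length, 0 < i → IsResponse (d.take i) d[i]! := by
  have htake {i k : ℕ} (hk : k < i) : (d.take i)[k]! = d[k]! := by
    simp [List.getElem?_take_of_lt hk]
  refine and_congr_right fun _ => forall_congr' fun i => forall_comm.trans <|
    forall_congr' fun hi => forall_congr' fun _ => ?_
  simp only [isResponse_iff, List.length_take_of_le hi.le]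
  grind

theorem IsDialogue.lt_of_ref_eq_some {k l : ℕ} {z : Bool} (hd : IsDialogue d) (hk : k < d.length)
    (href : d[k]!.ref = some (l, z)) : l < k := by
  have hpos : 0 < k := by
    rw [Nat.pos_iff_ne_zero]
    rintro rfl
    exact Option.some_ne_none _ (href.symm.trans (hd.1 hk).1)
  obtain ⟨l', z', href', hlt, -⟩ := hd.2 k hpos hk
  simp_all

theorem isDialogue_append_singleton_iff (hd : 0 < d.length) :
    IsDialogue (d ++ [m]) ↔ IsDialogue d ∧ IsResponse d m := by
  have htake {i : ℕ} (hi : i < d.length) : (d ++ [m]).take i = d.take i :=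
    List.take_append_of_le_length hi.le
  rw [isDialogue_iff_forall_isResponse_take, isDialogue_iff_forall_isResponse_take,
    forall_lt_length_append_singleton, getElem!_append_of_lt [m] hd,
    getElem!_append_singleton_length, List.take_left]
  simp +contextual only [getElem!_append_of_lt, htake]
  simp [hd, and_assoc]

theorem ruleD10_append_singleton_iff :
    RuleD10 (d ++ [m]) ↔ RuleD10 d ∧ (d.length % 2 = 0 → ∀ a, m.stmt = .form (.atom a) →
      ∃ j < d.length, j % 2 = 1 ∧ d[j]!.stmt = .form (.atom a)) := by
  have hlt {i : ℕ} (hi : i < d.length) : (d ++ [m])[i]! = d[i]! := getElem!_append_of_lt [m] hi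
  simp only [RuleD10, forall_lt_length_append_singleton, getElem!_append_singleton_length]
  grind

theorem ruleD13_append_singleton_iff :
    RuleD13 (d ++ [m]) ↔ RuleD13 d ∧
      ∀ k, k % 2 = 0 → m.ref = some (k, true) → ∀ i < d.length, d[i]!.ref ≠ some (k, true) := by
  have hlt {i : ℕ} (hi : i < d.length) : (d ++ [m])[i]! = d[i]! := getElem!_append_of_lt [m] hi
  simp only [RuleD13, forall_lt_length_append_singleton, getElem!_append_singleton_length]
  grind

theorem commencesWith_append_iff {φ : Formula} (hd : 0 < d.length) (e : List Move) :
    CommencesWith φ (d ++ e) ↔ CommencesWith φ d := by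
  rw [CommencesWith, CommencesWith, getElem!_append_of_lt e hd]
  simp [hd]

theorem sDialogueFor_nRules_append_singleton_iff {φ : Formula} (hd : 0 < d.length) :
    SDialogueFor NRules φ (d ++ [m]) ↔ SDialogueFor NRules φ d ∧ IsResponse d m ∧
      (d.length % 2 = 0 → ∀ a, m.stmt = .form (.atom a) →
        ∃ j < d.length, j % 2 = 1 ∧ d[j]!.stmt = .form (.atom a)) ∧
      ∀ k, k % 2 = 0 → m.ref = some (k, true) → ∀ i < d.length, d[i]!.ref ≠ some (k, true) := by
  rw [SDialogueFor, NRules, isDialogue_append_singleton_iff hd, ruleD10_append_singleton_iff,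
    ruleD13_append_singleton_iff, commencesWith_append_iff hd, SDialogueFor, NRules]
  tauto

end Dialogue

theorem SDialogueFor.append_defense {φ χ : Formula} {d : List Move} {k l : ℕ} {s : Statement}
    (hd : SDialogueFor NRules φ d) (hk : k < d.length) (heven : k % 2 = 0)
    (hturn : d.length % 2 = 1) (href : d[k]!.ref = some (l, true)) (hχ : d[l]!.stmt = .form χ)
    (hs : Defends s d[k]!.stmt χ) :
    SDialogueFor NRules φ (d ++ [⟨s, some (k, false)⟩]) := by
  refine (sDialogueFor_nRules_append_singleton_iff hd.2.2.1).2 ⟨hd, ?_, by omega, by simp⟩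
  exact .defense hk (by omega) href (hd.1.lt_of_ref_eq_some hk href) hχ hs

namespace IsWinningStrategy

variable {S : List Move → Prop} {φ χ : Formula} {T : Set (List Move)}

theorem opening_mem (hT : IsWinningStrategy S φ T) : [⟨.form φ, none⟩] ∈ T := by
  obtain ⟨d, hd⟩ := hT.nonempty
  obtain ⟨hdial, -, hpos, hφ⟩ := hT.dialogues d hd
  obtain ⟨⟨s, r⟩, t, rfl⟩ := List.exists_cons_of_length_pos hpos
  obtain rfl : r = none := (hdial.1 hpos).1
  obtain rfl : s = .form φ := hφ
  exact hT.prefix_closed _ hd _ (by simp) (by simp)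

theorem exists_forall_append_singleton_notMem (hT : IsWinningStrategy S φ T)
    {Q : Set (List Move)} (hQT : Q ⊆ T) (hQ : Q.Nonempty) : ∃ d ∈ Q, ∀ m, d ++ [m] ∉ Q := by
  by_contra! hchild
  -- Closing `Q` under prefixes makes the infinite branch start at the root.
  let P : Set (List Move) := {e | ∃ d ∈ Q, e <+: d}
  have hP_child (e : P) : ∃ m, e.1 ++ [m] ∈ P := by
    obtain ⟨_, d, hd, t, rfl⟩ := e
    cases t with
    | nil =>
      obtain ⟨m, hm⟩ := hchild _ hd
      exact ⟨m, _, hm, by simp⟩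
    | cons m t => exact ⟨m, _, hd, t, by simp⟩
  choose step hstep using hP_child
  have hnil : [] ∈ P := hQ.imp fun d hd => ⟨hd, List.nil_prefix⟩
  let branch : ℕ → P := Nat.rec ⟨[], hnil⟩ fun _ e => ⟨e.1 ++ [step e], hstep e⟩
  have hbranch (n : ℕ) : (List.ofFn fun i : Fin n => step (branch i)) = (branch n).1 := by
    induction n with
    | zero => rfl
    | succ n ih => exact List.ofFn_succ_last.trans (congrArg (· ++ [step (branch n)]) ih)
  obtain ⟨n, hn, hnotMem⟩ := hT.no_infinite_branch fun i => step (branch i)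
  obtain ⟨d, hd, hsub⟩ := (branch n).2
  rw [← hbranch] at hsub
  exact hnotMem (hT.prefix_closed d (hQT hd) _ hsub (by simpa using hn))

theorem not_defends_of_proponent_attack (hT : IsWinningStrategy NRules φ T) {d : List Move}
    (hd : d ∈ T) {k l : ℕ} (hk : k < d.length) (heven : k % 2 = 0)
    (href : d[k]!.ref = some (l, true)) (hχ : d[l]!.stmt = .form χ) (s : Statement) :
    ¬ Defends s d[k]!.stmt χ := by
  intro hs
  have hl : l < d.length := ((hT.dialogues d hd).1.lt_of_ref_eq_some hk href).trans hk
  obtain ⟨_, ⟨he, t, rfl⟩, hmax⟩ := hT.exists_forall_append_singleton_notMem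
    (Q := {e ∈ T | d <+: e}) (Set.sep_subset _ _) ⟨d, hd, List.prefix_rfl⟩
  suffices ∃ m, (d ++ t) ++ [m] ∈ T by
    obtain ⟨m, hm⟩ := this
    exact hmax m ⟨hm, by simp⟩
  have hk' : k < (d ++ t).length := hk.trans_le (by simp)
  obtain hturn | hturn := Nat.mod_two_eq_zero_or_one (d ++ t).length
  · exact (hT.odd_unique_child _ he (by omega) hturn).exists
  · rw [← getElem!_append_of_lt t hk] at href hs
    rw [← getElem!_append_of_lt t hl] at hχ
    exact ⟨_, hT.even_all_children _ he hturn _ <|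
      (hT.dialogues _ he).append_defense hk' heven hturn href hχ hs⟩

theorem attack_opening_mem {ψ : Formula} (hT : IsWinningStrategy NRules (.impl χ ψ) T) :
    [⟨.form (.impl χ ψ), none⟩, ⟨.form χ, some (0, true)⟩] ∈ T := by
  have hopening := hT.opening_mem
  refine hT.even_all_children _ hopening rfl _ ?_
  refine (sDialogueFor_nRules_append_singleton_iff (by simp)).2
    ⟨hT.dialogues _ hopening, ?_, by simp, by simp⟩
  exact .attack (by simp) (by simp) rfl (.impl χ ψ)

end IsWinningStrategy

theorem SDialogueFor.attacks_antecedent {χ : Formula} {q : ℕ} {m : Move} (hχ : χ ≠ .atom q)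
    (hd : SDialogueFor NRules (.impl χ (.atom q))
      ([⟨.form (.impl χ (.atom q)), none⟩, ⟨.form χ, some (0, true)⟩] ++ [m])) :
    m.ref = some (1, true) ∧ Attacks m.stmt χ := by
  obtain ⟨-, hm, hD10, -⟩ := (sDialogueFor_nRules_append_singleton_iff (by simp)).1 hd
  cases hm with
  | @attack k s θ hk hplayer hθ hs =>
    obtain rfl : k = 1 := by grind
    obtain rfl : χ = θ := by simpa using hθ
    exact ⟨rfl, hs⟩
  | @defense k l s θ hk hplayer hattack hl hθ hs =>
    obtain ⟨rfl, rfl⟩ : k = 1 ∧ l = 0 := by grind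
    obtain rfl : .impl χ (.atom q) = θ := by simpa using hθ
    cases hs
    obtain ⟨j, hj, hodd, hatom⟩ := hD10 (by simp) q rfl
    obtain rfl : j = 1 := by grind
    exact absurd (by simpa using hatom) hχ

theorem conjunctive_modus_ponens_not_N_valid_general {χ : Formula} {q : ℕ} (hχ : χ ≠ .atom q)
    (hneg : ∀ θ, χ ≠ .neg θ) : ¬ NValid (.impl χ (.atom q)) := by
  rintro ⟨T, hT⟩
  obtain ⟨m, hm, -⟩ := hT.odd_unique_child _ hT.attack_opening_mem (by simp) (by simp)
  obtain ⟨href, hattack⟩ := (hT.dialogues _ hm).attacks_antecedent hχ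
  obtain ⟨s, hs⟩ := hattack.exists_defends hneg
  exact hT.not_defends_of_proponent_attack hm (k := 2) (by simp) (by simp) href rfl s hs

/-- The conjunctive form of modus ponens `(p ∧ (p → q)) → q`, for
distinct atoms `p` and `q`, is not N-valid. -/
theorem conjunctive_modus_ponens_not_N_valid (p q : ℕ) (hpq : p ≠ q) :
    ¬ NValid (Formula.impl
        (Formula.conj (Formula.atom p) (Formula.impl (Formula.atom p) (Formula.atom q)))
        (Formula.atom q)) :=
  conjunctive_modus_ponens_not_N_valid_general nofun nofun
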